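/- Let S = S(m,ℓ) be the spider with m ≥ 3 legs each having ℓ ≥ 1 vertices, let b be its body, and let 0 ≤ k ≤ ℓ. Then for every vertex v of S, Gain(S, C_S(k), Z(v)) ≥ Gain(S, C_S(k), Z(b)); consequently the guaranteed gain of Player 1 with the strategy C_S(k) is GGain(S, C_S(k)) = Gain(S, C_S(k), Z(b)). -/

import Mathlib

/-- The competitive-diffusion payoff of Player 1 with starting vertex `x` against
starting vertex `y`: the number of vertices strictly closer to `x` than to `y`. -/
noncomputable def gain {V : Type*} (G : SimpleGraph V) (x y : V) : ℕ :=
  {u : V | G.dist u x < G.dist u y}.ncard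

/-- The expected gain of Player 1 playing mixed strategy `X` against mixed strategy `Y`. -/
noncomputable def Gain {V : Type*} (G : SimpleGraph V) [Fintype V] (X Y : V → ℝ) : ℝ :=
  ∑ x : V, ∑ y : V, X x * Y y * (gain G x y : ℝ)

/-- The pure strategy `Z(v)` concentrated on vertex `v`. -/
def pureStrat {V : Type*} [DecidableEq V] (v : V) : V → ℝ := fun u => if u = v then 1 else 0

/-- Vertices of a spider with `m` legs each with `ℓ` vertices: `none` is the body,
`some (s, d)` is the vertex at distance `d+1` from the body on leg `s`. -/
abbrev SpiderVert (m ℓ : ℕ) := Option (Fin m × Fin ℓ)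

def spiderRel (m ℓ : ℕ) : SpiderVert m ℓ → SpiderVert m ℓ → Prop
  | none, some (_, d) => d.val = 0
  | some (s, d), some (s', d') => s = s' ∧ d.val + 1 = d'.val
  | _, _ => False

/-- The spider `S(m,ℓ)`: a body vertex to which `m` disjoint paths (legs), each with
`ℓ` vertices, are attached. -/
def Spider (m ℓ : ℕ) : SimpleGraph (SpiderVert m ℓ) := SimpleGraph.fromRel (spiderRel m ℓ)

/-- The mixed strategy `C_S(k)`: probability `1/(mk+1)` on the body and on each
vertex at distance at most `k` from the body on each leg. -/
noncomputable def CS (m ℓ k : ℕ) : SpiderVert m ℓ → ℝ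
  | none => 1 / (m * k + 1)
  | some (_, d) => if d.val + 1 ≤ k then 1 / (m * k + 1) else 0

/-!
Group the vertices by their distance `p` from the body, and compare the reply `v`, at distance `e`
on leg `t`, with the reply at the body. The body itself gains at least `ℓ`, a whole leg avoiding
`v`. Layers `0 < p < e` lose nothing and layer `e` loses at most `ℓ`. For `p > e` only the vertex on
leg `t` can lose, and together with one vertex of another leg the change is at least
`2⌊p/2⌋ - ⌊(p-e)/2⌋ - ⌊(p+e)/2⌋ = [p - e odd] - [p odd]`, which vanishes for even `e` and alternates
`1, -1, 1, …` from `p = e + 1` on for odd `e`. Hence all partial sums over the layers are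
nonnegative, and summation by parts gives the result for all nonincreasing weights on the layers.
-/

theorem dist_eq_of_lipschitz_of_descent {V : Type*} {G : SimpleGraph V} {z : V} {f : V → ℕ}
    (hz : f z = 0) (hlipschitz : ∀ x y, G.Adj x y → f x ≤ f y + 1)
    (hdescent : ∀ x, x ≠ z → ∃ y, G.Adj x y ∧ f y < f x) (x : V) : G.dist x z = f x := by
  have exists_short_walk (n : ℕ) : ∀ x, f x = n → ∃ p : G.Walk x z, p.length ≤ f x := by
    induction n using Nat.strong_induction_on with
    | _ n ih =>
      intro x hx
      obtain rfl | hne := eq_or_ne x z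
      · exact ⟨.nil, Nat.zero_le _⟩
      · obtain ⟨y, hadj, hlt⟩ := hdescent x hne
        obtain ⟨p, hp⟩ := ih (f y) (hx ▸ hlt) y rfl
        exact ⟨.cons hadj p, by rw [SimpleGraph.Walk.length_cons]; omega⟩
  have le_length {x y : V} (p : G.Walk x y) : f x ≤ f y + p.length := by
    induction p with
    | nil => simp
    | cons hadj p ih =>
      have := hlipschitz _ _ hadj
      rw [SimpleGraph.Walk.length_cons]
      omega
  obtain ⟨p, hp⟩ := exists_short_walk (f x) x rfl
  obtain ⟨q, hq⟩ := p.reachable.exists_walk_length_eq_dist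
  have := le_length q
  exact le_antisymm ((SimpleGraph.dist_le p).trans hp) (by omega)

theorem sum_range_mul_nonneg_of_antitone {R : Type*} [Semiring R] [PartialOrder R]
    [IsOrderedRing R] {w D : ℕ → R} {n : ℕ} (hw : Antitone w) (hw0 : ∀ p, 0 ≤ w p)
    (hD : ∀ N ≤ n, 0 ≤ ∑ p ∈ Finset.range N, D p) :
    0 ≤ ∑ p ∈ Finset.range n, w p * D p := by
  have weighted_le : ∀ N ≤ n,
      w N * ∑ p ∈ Finset.range N, D p ≤ ∑ p ∈ Finset.range N, w p * D p := by
    intro N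
    induction N with
    | zero => simp
    | succ N ih =>
      intro hN
      calc w (N + 1) * ∑ p ∈ Finset.range (N + 1), D p
          ≤ w N * ∑ p ∈ Finset.range (N + 1), D p :=
            mul_le_mul_of_nonneg_right (hw N.le_succ) (hD _ hN)
        _ = w N * ∑ p ∈ Finset.range N, D p + w N * D N := by
            rw [Finset.sum_range_succ, mul_add]
        _ ≤ ∑ p ∈ Finset.range (N + 1), w p * D p := by
            rw [Finset.sum_range_succ]
            exact add_le_add_left (ih (by omega)) _
  exact (mul_nonneg (hw0 n) (hD n le_rfl)).trans (weighted_le n le_rfl)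

theorem sum_range_nonneg_of_parity_bound {D : ℕ → ℤ} {ℓ e n : ℕ} (he : 0 < e) (hzero : ℓ ≤ D 0)
    (hlt : ∀ p, 0 < p → p < e → 0 ≤ D p) (heq : -(ℓ : ℤ) ≤ D e)
    (hgt : ∀ p < n, e < p → (((p - e) % 2 : ℕ) : ℤ) - ((p % 2 : ℕ) : ℤ) ≤ D p) :
    0 ≤ ∑ p ∈ Finset.range n, D p := by
  -- Beyond `e` the parity terms add up to `1` if `e` and `N` are both odd, and to `0` otherwise.
  have partial_sum_ge : ∀ N ≤ n,
      (if N = 0 then 0 else if N ≤ e then (ℓ : ℤ) else ((min (e % 2) (N % 2) : ℕ) : ℤ)) ≤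
        ∑ p ∈ Finset.range N, D p := by
    intro N
    induction N with
    | zero => simp
    | succ N ih =>
      intro hN
      specialize ih (by omega)
      rw [Finset.sum_range_succ]
      obtain rfl | hpos := N.eq_zero_or_pos
      · simpa [Nat.succ_le_iff.2 he] using hzero
      · obtain hNe | rfl | hNe := lt_trichotomy N e
        · have := hlt N hpos hNe
          split_ifs at ih ⊢ <;> omega
        · split_ifs at ih ⊢ <;> omega
        · have := hgt N hN hNe
          split_ifs at ih ⊢ <;> omega
  refine le_trans ?_ (partial_sum_ge n le_rfl)
  split_ifs <;> positivity

theorem antitone_ite_le {α R : Type*} [Preorder α] [DecidableLE α] [Preorder R] [Zero R] (k : α)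
    {c : R} (hc : 0 ≤ c) : Antitone fun p : α ↦ if p ≤ k then c else 0 := by
  intro p q hpq
  by_cases hq : q ≤ k
  · simp [hq, hpq.trans hq]
  · by_cases hp : p ≤ k <;> simp [hp, hq, hc]

theorem Gain_pureStrat {V : Type*} [Fintype V] [DecidableEq V] (G : SimpleGraph V) (X : V → ℝ)
    (v : V) : Gain G X (pureStrat v) = ∑ x, X x * gain G x v := by
  simp [Gain, pureStrat]

theorem gain_self {V : Type*} (G : SimpleGraph V) (x : V) : gain G x x = 0 := by
  simp [gain]

namespace Spider

variable {m ℓ : ℕ}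

/-- The distance of a vertex from the body. -/
def depth : SpiderVert m ℓ → ℕ
  | none => 0
  | some (_, d) => d + 1

theorem depth_le (x : SpiderVert m ℓ) : depth x ≤ ℓ := by
  rcases x with _ | ⟨_, d⟩
  · exact Nat.zero_le ℓ
  · exact d.isLt

theorem CS_eq_comp_depth (m ℓ k : ℕ) :
    CS m ℓ k = (fun p ↦ if p ≤ k then 1 / ((m : ℝ) * k + 1) else 0) ∘ depth := by
  ext (_ | ⟨s, d⟩) <;> simp [CS, depth]

/-- The distance in the spider in closed form: the difference of the depths on a common leg, their
sum otherwise. -/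
def pathDist : SpiderVert m ℓ → SpiderVert m ℓ → ℕ
  | none, y => depth y
  | x, none => depth x
  | some (s, d), some (t, e) => if s = t then (d - e) + (e - d) else (d + 1) + (e + 1)

theorem pathDist_le_of_spiderRel {x y : SpiderVert m ℓ} (h : spiderRel m ℓ x y)
    (z : SpiderVert m ℓ) :
    pathDist x z ≤ pathDist y z + 1 ∧ pathDist y z ≤ pathDist x z + 1 := by
  rcases x with _ | ⟨s, d⟩ <;> rcases y with _ | ⟨t, e⟩ <;> simp only [spiderRel] at h
  · rcases z with _ | ⟨r, c⟩ <;> simp only [pathDist, depth]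
    · omega
    · split_ifs <;> omega
  · obtain ⟨rfl, h⟩ := h
    rcases z with _ | ⟨r, c⟩ <;> simp only [pathDist, depth]
    · omega
    · split_ifs <;> omega

theorem adj_none_some {s : Fin m} {d : Fin ℓ} (hd : (d : ℕ) = 0) :
    (Spider m ℓ).Adj none (some (s, d)) := by
  simp [Spider, spiderRel, hd]

theorem adj_some_some (s : Fin m) {d e : Fin ℓ} (h : (d : ℕ) + 1 = e) :
    (Spider m ℓ).Adj (some (s, d)) (some (s, e)) := by
  have hne : d ≠ e := fun hde ↦ by rw [hde] at h; omega
  simp [Spider, spiderRel, hne, h]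

theorem exists_adj_pathDist_lt_of_forall_lt (s : Fin m) (d : Fin ℓ) {z : SpiderVert m ℓ}
    (hz : ∀ c, z = some (s, c) → c < d) :
    ∃ y, (Spider m ℓ).Adj (some (s, d)) y ∧ pathDist y z < pathDist (some (s, d)) z := by
  by_cases hd : (d : ℕ) = 0
  · refine ⟨none, (adj_none_some hd).symm, ?_⟩
    rcases z with _ | ⟨t, c⟩
    · simp [pathDist, depth]
    · have hst : s ≠ t := by
        rintro rfl
        have := hz c rfl
        omega
      simp [pathDist, depth, hst]
  · refine ⟨some (s, ⟨d - 1, by omega⟩), (adj_some_some s (by dsimp only; omega)).symm, ?_⟩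
    rcases z with _ | ⟨t, c⟩
    · simp only [pathDist, depth]
      omega
    · simp only [pathDist]
      split_ifs with hst
      · subst hst
        have := hz c rfl
        omega
      · omega

theorem exists_adj_pathDist_lt {x z : SpiderVert m ℓ} (hxz : x ≠ z) :
    ∃ y, (Spider m ℓ).Adj x y ∧ pathDist y z < pathDist x z := by
  rcases x with _ | ⟨s, d⟩
  · obtain ⟨⟨t, c⟩, rfl⟩ := Option.ne_none_iff_exists'.1 hxz.symm
    exact ⟨some (t, ⟨0, c.pos⟩), adj_none_some rfl, by simp [pathDist, depth]⟩
  · by_cases hz : ∀ c, z = some (s, c) → c < d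
    · exact exists_adj_pathDist_lt_of_forall_lt s d hz
    · push Not at hz
      obtain ⟨c, rfl, hdc⟩ := hz
      have hlt : d < c := hdc.lt_of_ne (by rintro rfl; exact hxz rfl)
      refine ⟨some (s, ⟨d + 1, by omega⟩), adj_some_some s rfl, ?_⟩
      simp only [pathDist, if_true]
      omega

theorem dist_eq_pathDist (x z : SpiderVert m ℓ) : (Spider m ℓ).dist x z = pathDist x z := by
  refine dist_eq_of_lipschitz_of_descent (f := (pathDist · z)) ?_ ?_
    (fun _ ↦ exists_adj_pathDist_lt) x
  · rcases z with _ | ⟨t, c⟩ <;> simp [pathDist, depth]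
  · rintro x y ⟨-, hrel | hrel⟩
    · exact (pathDist_le_of_spiderRel hrel z).1
    · exact (pathDist_le_of_spiderRel hrel z).2

/-- The vertices of leg `s` at depth greater than `c`. -/
def legTail (s : Fin m) (c : ℕ) : Finset (SpiderVert m ℓ) :=
  ({d | c ≤ (d : ℕ)} : Finset (Fin ℓ)).image fun d ↦ some (s, d)

theorem card_legTail (s : Fin m) (c : ℕ) :
    (legTail s c : Finset (SpiderVert m ℓ)).card = ℓ - c := by
  have hinj : Function.Injective fun d : Fin ℓ ↦ (some (s, d) : SpiderVert m ℓ) :=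
    fun d e h ↦ by simpa using h
  rw [legTail, Finset.card_image_of_injective _ hinj]
  have := Finset.card_filter_add_card_filter_not (s := Finset.univ) fun d : Fin ℓ ↦ (d : ℕ) < c
  simp only [not_lt, Fin.card_filter_val_lt, Finset.card_univ, Fintype.card_fin] at this
  omega

theorem le_gain_of_forall_pathDist_lt {x y : SpiderVert m ℓ} (s : Fin m) (c : ℕ)
    (h : ∀ d : Fin ℓ, c ≤ d → pathDist (some (s, d)) x < pathDist (some (s, d)) y) :
    ℓ - c ≤ gain (Spider m ℓ) x y := by
  rw [← card_legTail s c, ← Set.ncard_coe_finset]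
  refine Set.ncard_le_ncard (fun u hu ↦ ?_) (Set.toFinite _)
  obtain ⟨d, hd, rfl⟩ := Finset.mem_image.1 (Finset.mem_coe.1 hu)
  simpa only [Set.mem_ofPred_eq, dist_eq_pathDist] using h d (Finset.mem_filter.1 hd).2

theorem gain_body_le (s : Fin m) (d : Fin ℓ) :
    gain (Spider m ℓ) (some (s, d)) none ≤ ℓ - (d + 1) / 2 := by
  rw [← card_legTail s, ← Set.ncard_coe_finset]
  refine Set.ncard_le_ncard (fun u hu ↦ ?_) (Set.toFinite _)
  rw [Set.mem_ofPred_eq, dist_eq_pathDist, dist_eq_pathDist] at hu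
  rcases u with _ | ⟨t, e⟩
  · simp [pathDist, depth] at hu
  · simp only [pathDist, depth] at hu
    split_ifs at hu with hts
    · subst hts
      have : ((d : ℕ) + 1) / 2 ≤ e := by omega
      simpa [legTail] using this
    · omega

theorem le_gain_of_body {s t : Fin m} (hst : s ≠ t) (e : Fin ℓ) :
    ℓ ≤ gain (Spider m ℓ) none (some (t, e)) := by
  refine le_gain_of_forall_pathDist_lt s 0 fun d _ ↦ ?_
  simp only [pathDist, depth, hst, if_false]
  omega

theorem le_gain_of_ne {s t : Fin m} (hst : s ≠ t) (d e : Fin ℓ) :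
    ℓ - (d - e) / 2 ≤ gain (Spider m ℓ) (some (s, d)) (some (t, e)) := by
  refine le_gain_of_forall_pathDist_lt s _ fun c _ ↦ ?_
  simp only [pathDist, hst, if_false, if_true]
  omega

theorem le_gain_of_lt {s t : Fin m} (hst : s ≠ t) {d e : Fin ℓ} (hde : d < e) :
    ℓ ≤ gain (Spider m ℓ) (some (t, d)) (some (t, e)) := by
  refine le_gain_of_forall_pathDist_lt s 0 fun c _ ↦ ?_
  simp only [pathDist, hst, if_false]
  omega

theorem le_gain_of_gt (t : Fin m) {d e : Fin ℓ} (hed : e < d) :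
    ℓ - (d + e + 2) / 2 ≤ gain (Spider m ℓ) (some (t, d)) (some (t, e)) := by
  refine le_gain_of_forall_pathDist_lt t _ fun c _ ↦ ?_
  simp only [pathDist, if_true]
  omega

/-- How much more Player 1 gains from the start `x` when the opponent replies at `v` instead of at
the body. -/
noncomputable def advantage (v x : SpiderVert m ℓ) : ℤ :=
  gain (Spider m ℓ) x v - gain (Spider m ℓ) x none

theorem le_advantage_of_ne {s t : Fin m} (hst : s ≠ t) (d e : Fin ℓ) :
    (((d + 1) / 2 - (d - e) / 2 : ℕ) : ℤ) ≤ advantage (some (t, e)) (some (s, d)) := by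
  have := le_gain_of_ne hst d e
  have := gain_body_le s d
  unfold advantage
  omega

theorem advantage_nonneg_of_lt {s t : Fin m} (hst : s ≠ t) {d e : Fin ℓ} (hde : d < e) :
    0 ≤ advantage (some (t, e)) (some (t, d)) := by
  have := le_gain_of_lt hst hde
  have := gain_body_le t d
  unfold advantage
  omega

theorem neg_le_advantage (v : SpiderVert m ℓ) (s : Fin m) (d : Fin ℓ) :
    -(ℓ : ℤ) ≤ advantage v (some (s, d)) := by
  have := gain_body_le s d
  unfold advantage
  omega

theorem le_advantage_of_gt (t : Fin m) {d e : Fin ℓ} (hed : e < d) :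
    (((d + 1) / 2 : ℕ) : ℤ) - (((d + e + 2) / 2 : ℕ) : ℤ) ≤
      advantage (some (t, e)) (some (t, d)) := by
  have := le_gain_of_gt t hed
  have := gain_body_le t d
  unfold advantage
  omega

/-- The total advantage of the reply `v` over all starts at depth `p`. -/
noncomputable def layerAdvantage (v : SpiderVert m ℓ) (p : ℕ) : ℤ :=
  ∑ x with depth x = p, advantage v x

theorem Gain_sub_Gain_body (w : ℕ → ℝ) (v : SpiderVert m ℓ) :
    Gain (Spider m ℓ) (w ∘ depth) (pureStrat v) - Gain (Spider m ℓ) (w ∘ depth) (pureStrat none) =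
      ∑ p ∈ Finset.range (ℓ + 1), w p * layerAdvantage v p := by
  have hmaps : ∀ x ∈ (Finset.univ : Finset (SpiderVert m ℓ)), depth x ∈ Finset.range (ℓ + 1) :=
    fun x _ ↦ Finset.mem_range.2 (Nat.lt_succ_of_le (depth_le x))
  calc _ = ∑ x, w (depth x) * advantage v x := by
        simp [Gain_pureStrat, advantage, mul_sub]
    _ = ∑ p ∈ Finset.range (ℓ + 1), ∑ x with depth x = p, w (depth x) * advantage v x :=
        (Finset.sum_fiberwise_of_maps_to hmaps _).symm
    _ = _ := Finset.sum_congr rfl fun p _ ↦ by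
        rw [layerAdvantage, Int.cast_sum, Finset.mul_sum]
        exact Finset.sum_congr rfl fun x hx ↦ by rw [(Finset.mem_filter.1 hx).2]

theorem layerAdvantage_zero (v : SpiderVert m ℓ) :
    layerAdvantage v 0 = gain (Spider m ℓ) none v := by
  rw [layerAdvantage, Finset.sum_filter, Fintype.sum_option]
  simp [depth, advantage, gain_self]

theorem layerAdvantage_succ (v : SpiderVert m ℓ) (d : Fin ℓ) :
    layerAdvantage v (d + 1) = ∑ s, advantage v (some (s, d)) := by
  rw [layerAdvantage, Finset.sum_filter, Fintype.sum_option, Fintype.sum_prod_type]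
  simp [depth, Fin.val_inj]

theorem le_layerAdvantage {s t : Fin m} (hst : s ≠ t) (d e : Fin ℓ) :
    advantage (some (t, e)) (some (t, d)) + (((d + 1) / 2 - (d - e) / 2 : ℕ) : ℤ) ≤
      layerAdvantage (some (t, e)) (d + 1) := by
  rw [layerAdvantage_succ, ← Finset.add_sum_erase _ _ (Finset.mem_univ t)]
  gcongr
  calc _ ≤ advantage (some (t, e)) (some (s, d)) := le_advantage_of_ne hst d e
    _ ≤ _ := Finset.single_le_sum (f := fun r ↦ advantage (some (t, e)) (some (r, d)))
      (fun r hr ↦ (Int.natCast_nonneg _).trans (le_advantage_of_ne (Finset.ne_of_mem_erase hr) d e))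
      (Finset.mem_erase.2 ⟨hst, Finset.mem_univ s⟩)

theorem sum_range_layerAdvantage_nonneg (hm : 2 ≤ m) (t : Fin m) (e : Fin ℓ) {n : ℕ}
    (hn : n ≤ ℓ + 1) : 0 ≤ ∑ p ∈ Finset.range n, layerAdvantage (some (t, e)) p := by
  have := Fin.nontrivial_iff_two_le.2 hm
  obtain ⟨s, hst⟩ := exists_ne t
  apply sum_range_nonneg_of_parity_bound (ℓ := ℓ) (e := e + 1) (Nat.succ_pos _)
  · rw [layerAdvantage_zero]
    exact_mod_cast le_gain_of_body hst e
  · intro p hpos hpe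
    obtain ⟨d, rfl⟩ : ∃ d : Fin ℓ, (d : ℕ) + 1 = p := ⟨⟨p - 1, by omega⟩, by dsimp only; omega⟩
    calc (0 : ℤ) ≤ advantage (some (t, e)) (some (t, d)) :=
          advantage_nonneg_of_lt hst (by omega)
      _ ≤ _ := le_add_of_nonneg_right (Int.natCast_nonneg _)
      _ ≤ _ := le_layerAdvantage hst d e
  · calc -(ℓ : ℤ) ≤ advantage (some (t, e)) (some (t, e)) := neg_le_advantage _ t e
      _ ≤ _ := le_add_of_nonneg_right (Int.natCast_nonneg _)
      _ ≤ _ := le_layerAdvantage hst e e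
  · intro p hpn hep
    obtain ⟨d, rfl⟩ : ∃ d : Fin ℓ, (d : ℕ) + 1 = p := ⟨⟨p - 1, by omega⟩, by dsimp only; omega⟩
    have own_leg := le_advantage_of_gt t (d := d) (e := e) (by omega)
    have both_legs := le_layerAdvantage hst d e
    omega

theorem Gain_body_le_Gain (hm : 2 ≤ m) {w : ℕ → ℝ} (hw : Antitone w) (hw0 : ∀ p, 0 ≤ w p)
    (v : SpiderVert m ℓ) :
    Gain (Spider m ℓ) (w ∘ depth) (pureStrat none) ≤
      Gain (Spider m ℓ) (w ∘ depth) (pureStrat v) := by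
  rcases v with _ | ⟨t, e⟩
  · exact le_rfl
  · rw [← sub_nonneg, Gain_sub_Gain_body]
    exact sum_range_mul_nonneg_of_antitone hw hw0 fun n hn ↦
      mod_cast sum_range_layerAdvantage_nonneg hm t e hn

end Spider

theorem stmt_6_general (m ℓ : ℕ) (hm : 2 ≤ m) (w : ℕ → ℝ) (hw : Antitone w)
    (hw0 : ∀ p, 0 ≤ w p) :
    (∀ v : SpiderVert m ℓ,
      Gain (Spider m ℓ) (w ∘ Spider.depth) (pureStrat (none : SpiderVert m ℓ)) ≤
        Gain (Spider m ℓ) (w ∘ Spider.depth) (pureStrat v)) ∧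
    Finset.univ.inf' Finset.univ_nonempty
        (fun y : SpiderVert m ℓ => Gain (Spider m ℓ) (w ∘ Spider.depth) (pureStrat y)) =
      Gain (Spider m ℓ) (w ∘ Spider.depth) (pureStrat (none : SpiderVert m ℓ)) := by
  have body_le := Spider.Gain_body_le_Gain (ℓ := ℓ) hm hw hw0
  exact ⟨body_le, le_antisymm (Finset.inf'_le _ (Finset.mem_univ _))
    (Finset.le_inf' _ _ fun v _ ↦ body_le v)⟩

/-- On the spider `S(m,ℓ)` with body `b`, for `0 ≤ k ≤ ℓ`, the gain of `C_S(k)` against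
any pure strategy is at least its gain against `Z(b)`; consequently the guaranteed gain
`GGain(S, C_S(k)) = min_y Gain(S, C_S(k), Z(y))` equals `Gain(S, C_S(k), Z(b))`. -/
theorem stmt_6 (m ℓ k : ℕ) (hm : 3 ≤ m) (hℓ : 1 ≤ ℓ) (hk : k ≤ ℓ) :
    (∀ v : SpiderVert m ℓ,
      Gain (Spider m ℓ) (CS m ℓ k) (pureStrat (none : SpiderVert m ℓ)) ≤
        Gain (Spider m ℓ) (CS m ℓ k) (pureStrat v)) ∧
    Finset.univ.inf' Finset.univ_nonempty
        (fun y : SpiderVert m ℓ => Gain (Spider m ℓ) (CS m ℓ k) (pureStrat y)) =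
      Gain (Spider m ℓ) (CS m ℓ k) (pureStrat (none : SpiderVert m ℓ)) := by
  have hc : 0 ≤ 1 / ((m : ℝ) * k + 1) := by positivity
  rw [Spider.CS_eq_comp_depth]
  exact stmt_6_general m ℓ (by omega) _ (antitone_ite_le k hc) fun p ↦
    ite_nonneg hc le_rfl
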